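/- Let X be a centered square-integrable real random variable admitting a Stein kernel τ with τ(X) square-integrable and E[τ(X)] = E[X²]. Then d_W(X, 𝒩) ≤ |1 − E[X²]| + √(E[τ(X)²] − (E[X²])²). -/

import Mathlib

open MeasureTheory ProbabilityTheory

/-- Wasserstein distance between two laws on `ℝ`, as a supremum over
1-Lipschitz test functions. -/
noncomputable def dW (μ ν : Measure ℝ) : ℝ :=
  ⨆ h : {f : ℝ → ℝ // LipschitzWith 1 f}, |(∫ x, h.1 x ∂μ) - ∫ x, h.1 x ∂ν|

/-- The standard Gaussian law `N(0,1)` on `ℝ`. -/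
noncomputable def stdGaussian : Measure ℝ := gaussianReal 0 1

/-- `τ` is a Stein kernel for `X`: `E[X φ(X)] = E[φ'(X) τ(X)]` for every bounded
`C¹` function `φ` with bounded derivative. -/
def IsSteinKernel {Ω : Type*} [MeasureSpace Ω] (X : Ω → ℝ) (τ : ℝ → ℝ) : Prop :=
  ∀ φ : ℝ → ℝ, ContDiff ℝ 1 φ → (∃ C, ∀ x, |φ x| ≤ C) → (∃ C, ∀ x, |deriv φ x| ≤ C) →
    ∫ ω, X ω * φ (X ω) = ∫ ω, deriv φ (X ω) * τ (X ω)

/-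
Stein's method. For a Lipschitz function `h` and a standard Gaussian variable `N` with law `γ` and
density `φ`, the function `f x = φ(x)⁻¹ ∫_{y ≤ x} (h y - E h(N)) dγ(y)` solves Stein's equation
`f' x - x f x = h x - E h(N)`, so the Stein kernel turns `E h(X) - E h(N)` into
`E[f'(X) (1 - τ(X))]`. Everything rests on `|f| ≤ 1` and `|f'| ≤ 1` for `1`-Lipschitz `h`. With
`Ψ(x) = E (N - x)⁺` these bounds reduce to the identity `P(N > x) Ψ(-x) + P(N ≤ x) Ψ(x) = φ(x)` and
to the inequality `2 Ψ(x) Ψ(-x) ≤ φ(x)`. For `x ≥ 0` the latter follows from `φ ≤ 1 / 2` and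
`Ψ(x) φ(x) ≤ P(N > x)²`, which is the Cauchy-Schwarz inequality for `y - x` on `(x, ∞)`.
-/

open Set Filter
open scoped NNReal

section FiniteMeasure

variable {α : Type*} {mα : MeasurableSpace α} {μ : Measure α}

lemma sq_integral_le_measureReal_univ_mul_integral_sq [IsFiniteMeasure μ] {f : α → ℝ}
    (hf : MemLp f 2 μ) : (∫ a, f a ∂μ) ^ 2 ≤ μ.real univ * ∫ a, f a ^ 2 ∂μ := by
  have hf₁ : Integrable f μ := hf.integrable one_le_two
  have hquad (t : ℝ) :
      0 ≤ μ.real univ * (t * t) + 2 * (∫ a, f a ∂μ) * t + ∫ a, f a ^ 2 ∂μ := by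
    calc 0 ≤ ∫ a, (t * t + 2 * t * f a + f a ^ 2) ∂μ :=
          integral_nonneg fun a ↦ (sq_nonneg (t + f a)).trans_eq (by ring)
      _ = _ := by
        have hlin : Integrable (fun a ↦ t * t + 2 * t * f a) μ :=
          (integrable_const _).add (hf₁.const_mul _)
        rw [integral_add hlin hf.integrable_sq,
          integral_add (integrable_const _) (hf₁.const_mul _), integral_const, integral_const_mul,
          smul_eq_mul]
        ring
  have hdiscrim := discrim_le_zero hquad
  rw [discrim] at hdiscrim
  linarith

lemma integral_abs_sub_le_abs_sub_integral_add_sqrt_variance [IsProbabilityMeasure μ] {Y : α → ℝ}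
    (hY : MemLp Y 2 μ) (c : ℝ) :
    ∫ a, |c - Y a| ∂μ ≤ |c - ∫ a, Y a ∂μ| + √(variance Y μ) := by
  set m := ∫ a, Y a ∂μ with hm
  have hdev : MemLp (fun a ↦ |Y a - m|) 2 μ := (hY.sub (memLp_const m)).abs
  have hdev_le : ∫ a, |Y a - m| ∂μ ≤ √(variance Y μ) := by
    refine Real.le_sqrt_of_sq_le
      ((sq_integral_le_measureReal_univ_mul_integral_sq hdev).trans_eq ?_)
    simp only [probReal_univ, one_mul, sq_abs, variance_eq_integral hY.aemeasurable, ← hm]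
  have hYint : Integrable (fun a ↦ |c - Y a|) μ :=
    ((integrable_const c).sub (hY.integrable one_le_two)).abs
  have hdevint : Integrable (fun a ↦ |Y a - m|) μ := hdev.integrable one_le_two
  calc ∫ a, |c - Y a| ∂μ ≤ ∫ a, (|c - m| + |Y a - m|) ∂μ :=
        integral_mono hYint ((integrable_const _).add hdevint) fun a ↦ by
          simpa only [abs_sub_comm m (Y a)] using abs_sub_le c m (Y a)
    _ = |c - m| + ∫ a, |Y a - m| ∂μ := by
        rw [integral_add (integrable_const _) hdevint, integral_const, probReal_univ, one_smul]
    _ ≤ |c - m| + √(variance Y μ) := by gcongr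

variable {E F : Type*} [NormedAddCommGroup E] [NormedAddCommGroup F] {K : ℝ≥0} {h : E → F}

lemma integrable_comp_of_lipschitzWith [IsFiniteMeasure μ] (hh : LipschitzWith K h) {X : α → E}
    (hX : Integrable X μ) : Integrable (fun a ↦ h (X a)) μ := by
  refine ((integrable_const ‖h 0‖).add (hX.norm.const_mul (K : ℝ))).mono'
    (hh.continuous.comp_aestronglyMeasurable hX.aestronglyMeasurable) (ae_of_all _ fun a ↦ ?_)
  calc ‖h (X a)‖ ≤ ‖h 0‖ + ‖h (X a) - h 0‖ := norm_le_norm_add_norm_sub' _ _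
    _ ≤ ‖h 0‖ + K * ‖X a‖ := by
        simpa only [sub_zero] using add_le_add_right (hh.norm_sub_le (X a) 0) _

lemma norm_integral_sub_le_of_lipschitzWith [NormedSpace ℝ F] (hh : LipschitzWith K h) {X : α → E}
    {x : E} (hX : Integrable (fun a ↦ X a - x) μ) :
    ‖∫ a, (h (X a) - h x) ∂μ‖ ≤ K * ∫ a, ‖X a - x‖ ∂μ := by
  rw [← integral_const_mul]
  exact norm_integral_le_of_norm_le (hX.norm.const_mul _) (ae_of_all _ fun a ↦ hh.norm_sub_le _ _)

end FiniteMeasure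

lemma measureReal_Iic_add_measureReal_Ioi (μ : Measure ℝ) [IsProbabilityMeasure μ] (x : ℝ) :
    μ.real (Iic x) + μ.real (Ioi x) = 1 := by
  rw [← compl_Iic, probReal_add_probReal_compl measurableSet_Iic]

lemma integral_sub_eq_setIntegral_Iic_add_setIntegral_Ioi {μ : Measure ℝ}
    [IsProbabilityMeasure μ] {h : ℝ → ℝ} (hint : Integrable h μ)
    (x c : ℝ) : (∫ z, h z ∂μ) - c = (∫ y in Iic x, (h y - c) ∂μ) + ∫ y in Ioi x, (h y - c) ∂μ := by
  have hsub : Integrable (fun y ↦ h y - c) μ := hint.sub (integrable_const c)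
  rw [intervalIntegral.integral_Iic_add_Ioi hsub.integrableOn hsub.integrableOn,
    integral_sub hint (integrable_const c), integral_const, probReal_univ, one_smul]

lemma hasDerivAt_setIntegral_Iic {E : Type*} [NormedAddCommGroup E] [NormedSpace ℝ E]
    [CompleteSpace E] {g : ℝ → E} (hg : Integrable g) {x : ℝ} (hgx : ContinuousAt g x) :
    HasDerivAt (fun u ↦ ∫ y in Iic u, g y) (g x) x := by
  have hsplit : (fun u ↦ ∫ y in Iic u, g y) =
      fun u ↦ (∫ y in Iic x, g y) + ∫ y in x..u, g y := by
    ext u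
    rw [← intervalIntegral.integral_Iic_sub_Iic hg.integrableOn hg.integrableOn, add_sub_cancel]
  rw [hsplit]
  exact (intervalIntegral.integral_hasDerivAt_right hg.intervalIntegrable
    hg.aestronglyMeasurable.stronglyMeasurableAtFilter hgx).const_add _

section Gaussian

variable {m : ℝ} {v : ℝ≥0}

lemma hasDerivAt_gaussianPDFReal (m : ℝ) (v : ℝ≥0) (x : ℝ) :
    HasDerivAt (gaussianPDFReal m v) (-((x - m) / v * gaussianPDFReal m v x)) x := by
  have hexponent : HasDerivAt (fun y : ℝ ↦ -(y - m) ^ 2 / (2 * v)) (-((x - m) / v)) x := by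
    convert! ((((hasDerivAt_id x).sub_const m).pow 2).neg).div_const (2 * (v : ℝ)) using 1
    simp only [id_eq, Nat.cast_ofNat, Nat.add_one_sub_one, pow_one, mul_one]
    rw [← mul_neg, mul_div_mul_left _ _ two_ne_zero, neg_div]
  rw [gaussianPDFReal_def]
  convert! hexponent.exp.const_mul (√(2 * Real.pi * v))⁻¹ using 1
  ring

lemma continuous_gaussianPDFReal (m : ℝ) (v : ℝ≥0) : Continuous (gaussianPDFReal m v) :=
  continuous_iff_continuousAt.2 fun x ↦ (hasDerivAt_gaussianPDFReal m v x).continuousAt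

lemma gaussianPDFReal_neg (m : ℝ) (v : ℝ≥0) (x : ℝ) :
    gaussianPDFReal m v (-x) = gaussianPDFReal (-m) v x := by
  simp only [gaussianPDFReal]
  ring_nf

lemma gaussianPDFReal_le (m : ℝ) (v : ℝ≥0) (x : ℝ) :
    gaussianPDFReal m v x ≤ (√(2 * Real.pi * v))⁻¹ :=
  mul_le_of_le_one_right (by positivity) <| Real.exp_le_one_iff.2 <|
    div_nonpos_of_nonpos_of_nonneg (neg_nonpos.2 (sq_nonneg _)) (by positivity)

lemma gaussianPDFReal_zero_one_le_half (x : ℝ) : gaussianPDFReal 0 1 x ≤ 1 / 2 := by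
  have hsqrt : 2 ≤ √(2 * Real.pi * (1 : ℝ≥0)) :=
    Real.le_sqrt_of_sq_le (by rw [NNReal.coe_one]; linarith [Real.pi_gt_three])
  calc gaussianPDFReal 0 1 x ≤ (√(2 * Real.pi * (1 : ℝ≥0)))⁻¹ := gaussianPDFReal_le 0 1 x
    _ ≤ 2⁻¹ := inv_anti₀ two_pos hsqrt
    _ = 1 / 2 := (one_div 2).symm

lemma integrable_gaussianReal_iff (hv : v ≠ 0) {f : ℝ → ℝ} :
    Integrable f (gaussianReal m v) ↔ Integrable (fun x ↦ gaussianPDFReal m v x * f x) := by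
  rw [gaussianReal_of_var_ne_zero m hv, integrable_withDensity_iff_integrable_smul'
    (measurable_gaussianPDF m v) (ae_of_all _ fun _ ↦ gaussianPDF_lt_top)]
  simp only [toReal_gaussianPDF, smul_eq_mul]

lemma setIntegral_gaussianReal_eq (hv : v ≠ 0) (f : ℝ → ℝ) {s : Set ℝ} (hs : MeasurableSet s) :
    ∫ x in s, f x ∂gaussianReal m v = ∫ x in s, gaussianPDFReal m v x * f x := by
  rw [gaussianReal_of_var_ne_zero m hv, setIntegral_withDensity_eq_setIntegral_toReal_smul
    (measurable_gaussianPDF m v) (ae_of_all _ fun _ ↦ gaussianPDF_lt_top) f hs]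
  simp only [toReal_gaussianPDF, smul_eq_mul]

lemma setIntegral_Ioi_stein_gaussianReal (hv : v ≠ 0) {g g' : ℝ → ℝ}
    (hderiv : ∀ x, HasDerivAt g (g' x) x) (hg : Integrable g (gaussianReal m v))
    (hstein : Integrable (fun x ↦ (x - m) * g x - v * g' x) (gaussianReal m v)) (a : ℝ) :
    ∫ x in Ioi a, ((x - m) * g x - v * g' x) ∂gaussianReal m v =
      v * (gaussianPDFReal m v a * g a) := by
  have hprod (x : ℝ) : HasDerivAt (fun x ↦ v * (gaussianPDFReal m v x * g x))
      (-(gaussianPDFReal m v x * ((x - m) * g x - v * g' x))) x := by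
    convert! ((hasDerivAt_gaussianPDFReal m v x).mul (hderiv x)).const_mul (v : ℝ) using 1
    have : (v : ℝ) ≠ 0 := NNReal.coe_ne_zero.2 hv
    field_simp
    ring
  have hint := ((integrable_gaussianReal_iff hv).1 hstein).neg.integrableOn (s := Ioi a)
  have hlim := tendsto_zero_of_hasDerivAt_of_integrableOn_Ioi (fun x _ ↦ hprod x) hint
    (((integrable_gaussianReal_iff hv).1 hg).const_mul _).integrableOn
  have hFTC := integral_Ioi_of_hasDerivAt_of_tendsto' (fun x _ ↦ hprod x) hint hlim
  rw [integral_neg, zero_sub, neg_inj] at hFTC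
  rw [setIntegral_gaussianReal_eq hv _ measurableSet_Ioi, hFTC]

lemma hasDerivAt_setIntegral_Iic_gaussianReal (hv : v ≠ 0) {g : ℝ → ℝ}
    (hg : Integrable g (gaussianReal m v)) {x : ℝ} (hgx : ContinuousAt g x) :
    HasDerivAt (fun u ↦ ∫ y in Iic u, g y ∂gaussianReal m v) (gaussianPDFReal m v x * g x) x := by
  simp only [setIntegral_gaussianReal_eq hv g measurableSet_Iic]
  exact hasDerivAt_setIntegral_Iic ((integrable_gaussianReal_iff hv).1 hg)
    ((continuous_gaussianPDFReal m v).continuousAt.mul hgx)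

lemma measureReal_Ioi_neg_gaussianReal (hv : v ≠ 0) (x : ℝ) :
    (gaussianReal m v).real (Ioi (-x)) = (gaussianReal (-m) v).real (Iic x) := by
  have := nullSingletonClass_gaussianReal (μ := -m) hv
  calc (gaussianReal m v).real (Ioi (-x))
      = ((gaussianReal (-m) v).map fun y ↦ -y).real (Ioi (-x)) := by
        rw [gaussianReal_map_neg, neg_neg]
    _ = (gaussianReal (-m) v).real (Iio x) := by
        rw [map_measureReal_apply measurable_neg measurableSet_Ioi]
        simp
    _ = (gaussianReal (-m) v).real (Iic x) := measureReal_congr Iio_ae_eq_Iic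

lemma integrable_fun_id_gaussianReal (m : ℝ) (v : ℝ≥0) :
    Integrable (fun y ↦ y) (gaussianReal m v) :=
  memLp_one_iff_integrable.1 (memLp_id_gaussianReal 1)

lemma integrable_sub_const_gaussianReal (m : ℝ) (v : ℝ≥0) (x : ℝ) :
    Integrable (fun y ↦ y - x) (gaussianReal m v) :=
  (integrable_fun_id_gaussianReal m v).sub (integrable_const x)

lemma integrable_gaussianReal_of_lipschitzWith {K : ℝ≥0} {h : ℝ → ℝ} (hh : LipschitzWith K h)
    (m : ℝ) (v : ℝ≥0) : Integrable h (gaussianReal m v) :=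
  integrable_comp_of_lipschitzWith hh (integrable_fun_id_gaussianReal m v)

end Gaussian

section StandardGaussian

local notation "γ" => gaussianReal 0 1
local notation "φ" => gaussianPDFReal 0 1

/-- The expected excess `Ψ(x) = E (N - x)⁺` of a standard Gaussian variable `N` over the level `x`,
written as an integral over the half-line where the positive part does not vanish. -/
noncomputable def gaussianExcess (x : ℝ) : ℝ := ∫ y in Ioi x, (y - x) ∂γ

lemma gaussianExcess_nonneg (x : ℝ) : 0 ≤ gaussianExcess x :=
  setIntegral_nonneg measurableSet_Ioi fun _ hy ↦ sub_nonneg.2 (le_of_lt hy)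

lemma gaussianExcess_eq (x : ℝ) : gaussianExcess x = φ x - x * (γ).real (Ioi x) := by
  have hid := integrable_fun_id_gaussianReal 0 1
  have hmean : ∫ y in Ioi x, y ∂γ = φ x := by
    simpa using setIntegral_Ioi_stein_gaussianReal (m := 0) (v := 1) (g := fun _ ↦ 1)
      (g' := fun _ ↦ 0) one_ne_zero (fun y ↦ hasDerivAt_const y 1) (integrable_const _)
      (by simpa using hid) x
  rw [gaussianExcess, integral_sub hid.integrableOn (integrable_const x), hmean, setIntegral_const,
    smul_eq_mul, mul_comm]

lemma setIntegral_Ioi_sub_sq_gaussianReal (x : ℝ) :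
    ∫ y in Ioi x, (y - x) ^ 2 ∂γ = (γ).real (Ioi x) - x * gaussianExcess x := by
  have hsq : Integrable (fun y ↦ (y - x) ^ 2) γ :=
    ((memLp_id_gaussianReal 2).sub (memLp_const x)).integrable_sq
  have hstein (y : ℝ) : (y - 0) * (y - 2 * x) - ((1 : ℝ≥0) : ℝ) * 1 =
      (y - x) ^ 2 - (x ^ 2 + 1) := by
    rw [NNReal.coe_one]; ring
  have hint := setIntegral_Ioi_stein_gaussianReal (m := 0) (v := 1) (g := fun y ↦ y - 2 * x)
    (g' := fun _ ↦ 1) one_ne_zero (fun y ↦ (hasDerivAt_id y).sub_const _)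
    (integrable_sub_const_gaussianReal 0 1 (2 * x))
    ((hsq.sub (integrable_const _)).congr (ae_of_all _ fun y ↦ (hstein y).symm)) x
  simp only [hstein] at hint
  rw [integral_sub hsq.integrableOn (integrable_const _), setIntegral_const, smul_eq_mul,
    NNReal.coe_one] at hint
  rw [gaussianExcess_eq]
  linarith

lemma gaussianExcess_neg_eq (x : ℝ) : gaussianExcess (-x) = φ x + x * (γ).real (Iic x) := by
  rw [gaussianExcess_eq, gaussianPDFReal_neg, measureReal_Ioi_neg_gaussianReal one_ne_zero,
    neg_zero]
  ring

lemma gaussianExcess_neg (x : ℝ) : gaussianExcess (-x) = gaussianExcess x + x := by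
  rw [gaussianExcess_neg_eq, gaussianExcess_eq]
  linear_combination x * measureReal_Iic_add_measureReal_Ioi γ x

lemma setIntegral_Ioi_abs_sub_gaussianReal (x : ℝ) :
    ∫ y in Ioi x, |y - x| ∂γ = gaussianExcess x :=
  setIntegral_congr_fun measurableSet_Ioi fun _ hy ↦ abs_of_pos (sub_pos.2 hy)

lemma setIntegral_Iic_abs_sub_gaussianReal (x : ℝ) :
    ∫ y in Iic x, |y - x| ∂γ = gaussianExcess (-x) := by
  have hsub := integrable_sub_const_gaussianReal 0 1 x
  have hid := integrable_fun_id_gaussianReal 0 1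
  have htotal : ∫ y, (y - x) ∂γ = -x := by
    rw [integral_sub hid (integrable_const x), integral_id_gaussianReal]
    simp
  have hsplit := intervalIntegral.integral_Iic_add_Ioi (b := x) hsub.integrableOn
    hsub.integrableOn
  have habs : ∫ y in Iic x, |y - x| ∂γ = -∫ y in Iic x, (y - x) ∂γ := by
    rw [← integral_neg]
    exact setIntegral_congr_fun measurableSet_Iic fun _ hy ↦ abs_of_nonpos (sub_nonpos.2 hy)
  rw [habs, gaussianExcess_neg, gaussianExcess]
  linarith

lemma gaussianExcess_mul_gaussianPDFReal_le_sq (x : ℝ) :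
    gaussianExcess x * φ x ≤ (γ).real (Ioi x) ^ 2 := by
  have hL2 : MemLp (fun y ↦ y - x) 2 ((γ).restrict (Ioi x)) :=
    ((memLp_id_gaussianReal 2).sub (memLp_const x)).restrict _
  have hCS := sq_integral_le_measureReal_univ_mul_integral_sq hL2
  rw [measureReal_restrict_apply_univ, setIntegral_Ioi_sub_sq_gaussianReal,
    ← gaussianExcess] at hCS
  have hφ : φ x = gaussianExcess x + x * (γ).real (Ioi x) := by rw [gaussianExcess_eq]; ring
  calc gaussianExcess x * φ x
      = gaussianExcess x ^ 2 + (γ).real (Ioi x) * (x * gaussianExcess x) := by rw [hφ]; ring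
    _ ≤ (γ).real (Ioi x) ^ 2 := by linarith

-- Applied below with `b = gaussianExcess x`, `t = γ (x, ∞)` and `p = φ x`.
lemma two_mul_mul_add_le_of_mul_le_sq {x b t p : ℝ} (hx : 0 ≤ x) (hb : 0 ≤ b) (ht : 0 ≤ t)
    (hp : 0 < p) (hp_half : p ≤ 1 / 2) (hp_eq : p = b + x * t) (hbp : b * p ≤ t ^ 2) :
    2 * (b * (b + x)) ≤ p := by
  have hgap : 2 * b * (p - t) ≤ x * t ^ 2 := by
    rcases le_total p t with hpt | htp
    · calc 2 * b * (p - t) ≤ 0 :=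
            mul_nonpos_of_nonneg_of_nonpos (mul_nonneg zero_le_two hb) (sub_nonpos.2 hpt)
        _ ≤ x * t ^ 2 := by positivity
    · have hlin : 2 * t * (p - t) ≤ x * t * p := by
        calc 2 * t * (p - t) ≤ (p + t) * (p - t) :=
              mul_le_mul_of_nonneg_right (by linarith) (sub_nonneg.2 htp)
          _ = b * p - t ^ 2 + x * t * p := by rw [hp_eq]; ring
          _ ≤ x * t * p := by linarith
      refine le_of_mul_le_mul_left ?_ hp
      calc p * (2 * b * (p - t)) = b * p * (2 * (p - t)) := by ring
        _ ≤ t ^ 2 * (2 * (p - t)) := mul_le_mul_of_nonneg_right hbp (by linarith)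
        _ = t * (2 * t * (p - t)) := by ring
        _ ≤ t * (x * t * p) := mul_le_mul_of_nonneg_left hlin ht
        _ = p * (x * t ^ 2) := by ring
  refine le_of_mul_le_mul_left ?_ hp
  calc p * (2 * (b * (b + x))) = b ^ 2 * (2 * p) + 2 * b * x * p := by ring
    _ ≤ b ^ 2 * 1 + 2 * b * x * p := by gcongr; linarith
    _ = p * p - x * (x * t ^ 2 - 2 * b * (p - t)) := by rw [hp_eq]; ring
    _ ≤ p * p := sub_le_self _ (mul_nonneg hx (sub_nonneg.2 hgap))

lemma two_mul_gaussianExcess_mul_gaussianExcess_neg_le (x : ℝ) :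
    2 * (gaussianExcess x * gaussianExcess (-x)) ≤ φ x := by
  wlog hx : 0 ≤ x generalizing x
  · simpa only [neg_neg, mul_comm (gaussianExcess (-x)), gaussianPDFReal_neg, neg_zero] using
      this (-x) (neg_nonneg.2 (not_le.1 hx).le)
  rw [gaussianExcess_neg]
  exact two_mul_mul_add_le_of_mul_le_sq hx (gaussianExcess_nonneg x) measureReal_nonneg
    (gaussianPDFReal_pos 0 1 x one_ne_zero) (gaussianPDFReal_zero_one_le_half x)
    (by rw [gaussianExcess_eq, sub_add_cancel]) (gaussianExcess_mul_gaussianPDFReal_le_sq x)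

/-- The solution `f` of Stein's equation `f' x - x f x = h x - E h(N)` for the test function `h`,
where `N` is a standard Gaussian variable; it is the one that stays bounded for Lipschitz `h`. -/
noncomputable def steinSolution (h : ℝ → ℝ) (x : ℝ) : ℝ :=
  (∫ y in Iic x, (h y - ∫ z, h z ∂γ) ∂γ) / φ x

section SteinSolution

variable {h : ℝ → ℝ} {K : ℝ≥0}

lemma hasDerivAt_steinSolution (hcont : Continuous h) (hint : Integrable h γ) (x : ℝ) :
    HasDerivAt (steinSolution h) (x * steinSolution h x + (h x - ∫ z, h z ∂γ)) x := by
  have hφ : φ x ≠ 0 := (gaussianPDFReal_pos 0 1 x one_ne_zero).ne'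
  have hnum := hasDerivAt_setIntegral_Iic_gaussianReal one_ne_zero
    (hint.sub (integrable_const (∫ z, h z ∂γ))) (hcont.sub continuous_const).continuousAt (x := x)
  convert! hnum.div (hasDerivAt_gaussianPDFReal 0 1 x) hφ using 1
  simp only [steinSolution, Pi.sub_apply, sub_zero, NNReal.coe_one, div_one]
  field_simp
  ring

lemma deriv_steinSolution (hcont : Continuous h) (hint : Integrable h γ) (x : ℝ) :
    deriv (steinSolution h) x = x * steinSolution h x + (h x - ∫ z, h z ∂γ) :=
  (hasDerivAt_steinSolution hcont hint x).deriv

lemma contDiff_one_steinSolution (hcont : Continuous h) (hint : Integrable h γ) :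
    ContDiff ℝ 1 (steinSolution h) := by
  have hdiff : Differentiable ℝ (steinSolution h) := fun x ↦
    (hasDerivAt_steinSolution hcont hint x).differentiableAt
  refine contDiff_one_iff_deriv.2 ⟨hdiff, ?_⟩
  rw [funext (deriv_steinSolution hcont hint)]
  exact (continuous_id.mul hdiff.continuous).add (hcont.sub continuous_const)

lemma steinSolution_eq (hint : Integrable h γ) (x : ℝ) :
    steinSolution h x = ((γ).real (Ioi x) * (∫ y in Iic x, (h y - h x) ∂γ) -
      (γ).real (Iic x) * ∫ y in Ioi x, (h y - h x) ∂γ) / φ x := by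
  have hmean := integral_sub_eq_setIntegral_Iic_add_setIntegral_Ioi hint x (h x)
  have hsub : Integrable (fun y ↦ h y - h x) γ := hint.sub (integrable_const _)
  have hnum : ∫ y in Iic x, (h y - ∫ z, h z ∂γ) ∂γ =
      (∫ y in Iic x, (h y - h x) ∂γ) - (γ).real (Iic x) * ((∫ z, h z ∂γ) - h x) := by
    rw [← smul_eq_mul, ← setIntegral_const, ← integral_sub hsub.integrableOn (integrable_const _)]
    simp only [sub_sub, add_sub_cancel]
  rw [steinSolution, hnum, hmean]
  congr 1
  linear_combination -(∫ y in Iic x, (h y - h x) ∂γ) *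
    measureReal_Iic_add_measureReal_Ioi γ x

lemma deriv_steinSolution_eq (hcont : Continuous h) (hint : Integrable h γ) (x : ℝ) :
    deriv (steinSolution h) x = -(gaussianExcess x * (∫ y in Iic x, (h y - h x) ∂γ) +
      gaussianExcess (-x) * ∫ y in Ioi x, (h y - h x) ∂γ) / φ x := by
  have hφ : φ x ≠ 0 := (gaussianPDFReal_pos 0 1 x one_ne_zero).ne'
  rw [deriv_steinSolution hcont hint, steinSolution_eq hint,
    ← neg_sub (∫ z, h z ∂γ),
    integral_sub_eq_setIntegral_Iic_add_setIntegral_Ioi hint x,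
    gaussianExcess_eq, gaussianExcess_neg_eq]
  field_simp
  ring

lemma abs_setIntegral_Iic_sub_le_gaussianExcess (hh : LipschitzWith K h) (x : ℝ) :
    |∫ y in Iic x, (h y - h x) ∂γ| ≤ K * gaussianExcess (-x) := by
  rw [← setIntegral_Iic_abs_sub_gaussianReal]
  exact norm_integral_sub_le_of_lipschitzWith hh
    (integrable_sub_const_gaussianReal 0 1 x).integrableOn

lemma abs_setIntegral_Ioi_sub_le_gaussianExcess (hh : LipschitzWith K h) (x : ℝ) :
    |∫ y in Ioi x, (h y - h x) ∂γ| ≤ K * gaussianExcess x := by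
  rw [← setIntegral_Ioi_abs_sub_gaussianReal]
  exact norm_integral_sub_le_of_lipschitzWith hh
    (integrable_sub_const_gaussianReal 0 1 x).integrableOn

lemma abs_steinSolution_le (hh : LipschitzWith K h) (x : ℝ) : |steinSolution h x| ≤ K := by
  have hφ : 0 < φ x := gaussianPDFReal_pos 0 1 x one_ne_zero
  rw [steinSolution_eq (integrable_gaussianReal_of_lipschitzWith hh 0 1), abs_div, abs_of_pos hφ,
    div_le_iff₀ hφ]
  refine (abs_sub _ _).trans ?_
  rw [abs_mul, abs_mul, abs_of_nonneg measureReal_nonneg, abs_of_nonneg measureReal_nonneg]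
  calc (γ).real (Ioi x) * |∫ y in Iic x, (h y - h x) ∂γ|
        + (γ).real (Iic x) * |∫ y in Ioi x, (h y - h x) ∂γ|
      ≤ (γ).real (Ioi x) * (K * gaussianExcess (-x))
        + (γ).real (Iic x) * (K * gaussianExcess x) := by
        gcongr
        · exact abs_setIntegral_Iic_sub_le_gaussianExcess hh x
        · exact abs_setIntegral_Ioi_sub_le_gaussianExcess hh x
    _ = K * φ x := by
        rw [gaussianExcess_neg_eq, gaussianExcess_eq]
        linear_combination K * φ x * measureReal_Iic_add_measureReal_Ioi γ x

lemma abs_deriv_steinSolution_le (hh : LipschitzWith K h) (x : ℝ) :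
    |deriv (steinSolution h) x| ≤ K := by
  have hφ : 0 < φ x := gaussianPDFReal_pos 0 1 x one_ne_zero
  rw [deriv_steinSolution_eq hh.continuous (integrable_gaussianReal_of_lipschitzWith hh 0 1),
    abs_div, abs_of_pos hφ, div_le_iff₀ hφ, abs_neg]
  refine (abs_add_le _ _).trans ?_
  rw [abs_mul, abs_mul, abs_of_nonneg (gaussianExcess_nonneg _),
    abs_of_nonneg (gaussianExcess_nonneg _)]
  calc gaussianExcess x * |∫ y in Iic x, (h y - h x) ∂γ|
        + gaussianExcess (-x) * |∫ y in Ioi x, (h y - h x) ∂γ|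
      ≤ gaussianExcess x * (K * gaussianExcess (-x))
        + gaussianExcess (-x) * (K * gaussianExcess x) := by
        gcongr
        · exact gaussianExcess_nonneg x
        · exact abs_setIntegral_Iic_sub_le_gaussianExcess hh x
        · exact gaussianExcess_nonneg (-x)
        · exact abs_setIntegral_Ioi_sub_le_gaussianExcess hh x
    _ = K * (2 * (gaussianExcess x * gaussianExcess (-x))) := by ring
    _ ≤ K * φ x := by
        gcongr
        exact two_mul_gaussianExcess_mul_gaussianExcess_neg_le x

end SteinSolution

section SteinKernel

variable {Ω : Type*} [MeasureSpace Ω] [IsProbabilityMeasure (ℙ : Measure Ω)] {X : Ω → ℝ}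
  {τ : ℝ → ℝ} {h : ℝ → ℝ} {K : ℝ≥0}

lemma integral_comp_sub_integral_gaussianReal_eq (hX : Integrable X)
    (hτ : Integrable fun ω ↦ τ (X ω)) (hkernel : IsSteinKernel X τ) (hh : LipschitzWith K h) :
    (∫ ω, h (X ω)) - ∫ z, h z ∂γ = ∫ ω, deriv (steinSolution h) (X ω) * (1 - τ (X ω)) := by
  set f := steinSolution h
  have hhγ := integrable_gaussianReal_of_lipschitzWith hh 0 1
  have hf : ContDiff ℝ 1 f := contDiff_one_steinSolution hh.continuous hhγ
  have hf_le : ∀ x, |f x| ≤ K := abs_steinSolution_le hh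
  have hf'_le : ∀ x, |deriv f x| ≤ K := abs_deriv_steinSolution_le hh
  have hfX : AEStronglyMeasurable fun ω ↦ f (X ω) :=
    hf.continuous.comp_aestronglyMeasurable hX.aestronglyMeasurable
  have hf'X : AEStronglyMeasurable fun ω ↦ deriv f (X ω) :=
    (hf.continuous_deriv le_rfl).comp_aestronglyMeasurable hX.aestronglyMeasurable
  have hint_f' : Integrable fun ω ↦ deriv f (X ω) := .of_bound hf'X K (ae_of_all _ fun _ ↦ hf'_le _)
  have hint_Xf : Integrable fun ω ↦ X ω * f (X ω) := hX.mul_bdd hfX (ae_of_all _ fun _ ↦ hf_le _)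
  have hint_f'τ : Integrable fun ω ↦ deriv f (X ω) * τ (X ω) :=
    hτ.bdd_mul hf'X (ae_of_all _ fun _ ↦ hf'_le _)
  calc (∫ ω, h (X ω)) - ∫ z, h z ∂γ = ∫ ω, (h (X ω) - ∫ z, h z ∂γ) := by
        rw [integral_sub (integrable_comp_of_lipschitzWith hh hX) (integrable_const _),
          integral_const, probReal_univ, one_smul]
    _ = ∫ ω, (deriv f (X ω) - X ω * f (X ω)) := by
        simp only [f, deriv_steinSolution hh.continuous hhγ, add_sub_cancel_left]
    _ = (∫ ω, deriv f (X ω)) - ∫ ω, deriv f (X ω) * τ (X ω) := by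
        rw [integral_sub hint_f' hint_Xf, hkernel f hf ⟨K, hf_le⟩ ⟨K, hf'_le⟩]
    _ = ∫ ω, deriv f (X ω) * (1 - τ (X ω)) := by
        simp only [← integral_sub hint_f' hint_f'τ, mul_one_sub]

lemma abs_integral_comp_sub_integral_gaussianReal_le (hX : Integrable X)
    (hτ : Integrable fun ω ↦ τ (X ω)) (hkernel : IsSteinKernel X τ) (hh : LipschitzWith K h) :
    |(∫ ω, h (X ω)) - ∫ z, h z ∂γ| ≤ K * ∫ ω, |1 - τ (X ω)| := by
  rw [integral_comp_sub_integral_gaussianReal_eq hX hτ hkernel hh, ← integral_const_mul,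
    ← Real.norm_eq_abs]
  refine norm_integral_le_of_norm_le (((integrable_const _).sub hτ).abs.const_mul _)
    (ae_of_all _ fun ω ↦ ?_)
  rw [Real.norm_eq_abs, abs_mul]
  gcongr
  exact abs_deriv_steinSolution_le hh (X ω)

lemma dW_map_stdGaussian_le_integral_abs_one_sub (hX : Integrable X)
    (hτ : Integrable fun ω ↦ τ (X ω)) (hkernel : IsSteinKernel X τ) :
    dW (Measure.map X ℙ) _root_.stdGaussian ≤ ∫ ω, |1 - τ (X ω)| := by
  refine Real.iSup_le (fun ⟨h, hh⟩ ↦ ?_) (integral_nonneg fun _ ↦ abs_nonneg _)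
  rw [integral_map hX.aemeasurable hh.continuous.aestronglyMeasurable, _root_.stdGaussian]
  simpa only [NNReal.coe_one, one_mul] using
    abs_integral_comp_sub_integral_gaussianReal_le hX hτ hkernel hh

end SteinKernel

end StandardGaussian

theorem stein_wasserstein_second_moment_bound
    {Ω : Type*} [MeasureSpace Ω] [IsProbabilityMeasure (ℙ : Measure Ω)]
    (X : Ω → ℝ) (τ : ℝ → ℝ) (hXm : Measurable X) (hτm : Measurable τ)
    (hXint : Integrable X) (hXcentered : ∫ ω, X ω = 0)
    (hXsq : Integrable (fun ω => (X ω) ^ 2))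
    (hτsq : Integrable (fun ω => (τ (X ω)) ^ 2))
    (hτmean : ∫ ω, τ (X ω) = ∫ ω, (X ω) ^ 2)
    (hkernel : IsSteinKernel X τ) :
    dW (Measure.map X ℙ) stdGaussian ≤
      |1 - ∫ ω, (X ω) ^ 2| +
        Real.sqrt ((∫ ω, (τ (X ω)) ^ 2) - (∫ ω, (X ω) ^ 2) ^ 2) := by
  have hτL2 : MemLp (fun ω ↦ τ (X ω)) 2 :=
    (memLp_two_iff_integrable_sq (hτm.comp hXm).aestronglyMeasurable).2 hτsq
  have hvar : variance (fun ω ↦ τ (X ω)) ℙ = (∫ ω, (τ (X ω)) ^ 2) - (∫ ω, (X ω) ^ 2) ^ 2 := by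
    rw [variance_eq_sub hτL2, hτmean]
    rfl
  calc dW (Measure.map X ℙ) _root_.stdGaussian ≤ ∫ ω, |1 - τ (X ω)| :=
        dW_map_stdGaussian_le_integral_abs_one_sub hXint (hτL2.integrable one_le_two) hkernel
    _ ≤ |1 - ∫ ω, τ (X ω)| + √(variance (fun ω ↦ τ (X ω)) ℙ) :=
        integral_abs_sub_le_abs_sub_integral_add_sqrt_variance hτL2 1
    _ = _ := by rw [hτmean, hvar]
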